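/- Let M ∈ ℚ_+^{n×m} be column-stochastic and M = W·H where W ∈ ℝ_+^{n×d} and H ∈ ℝ_+^{d×m} are column-stochastic. Let ℳ be the LMC constructed from M and let ℳ' = (d+2, Σ, μ') be the LMC with states {0,1,…,d,d+1}, μ'(a_i)_{0,l} = H_{l,i}/m, μ'(b_j)_{l,d+1} = W_{j,l}, μ'(✓)_{d+1,d+1} = 1 (all other entries zero), for i ∈ [m], j ∈ [n], l ∈ [d]. Then rk(ℳ') = rank(W) + 2, and the row-stochastic matrix A ∈ ℝ_+^{(m+2)×(d+2)} with A_{0,0} = 1, A_{i,l} = H_{l,i} for i ∈ [m], l ∈ [d], A_{m+1,d+1} = 1 and all other entries zero satisfies A·B_{ℳ'} = B_ℳ; in particular ℳ' covers ℳ. -/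

import Mathlib

open Matrix

/-- Transition matrix of a labelled Markov chain extended to words:
`μ(σ₁…σ_k) = μ(σ₁) ⋯ μ(σ_k)`, with `μ(ε) = I`. -/
noncomputable def lmcWord {A S : Type} [Fintype S] [DecidableEq S]
    (μ : A → Matrix S S ℝ) (w : List A) : Matrix S S ℝ :=
  (w.map μ).prod

/-- Entry of the backward matrix: `(B_ℳ)_{i,w} = e_i^⊤ μ(w) 𝟙`. -/
noncomputable def lmcB {A S : Type} [Fintype S] [DecidableEq S]
    (μ : A → Matrix S S ℝ) (i : S) (w : List A) : ℝ :=
  ∑ j, lmcWord μ w i j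

/-- The rank of an LMC: the dimension of the span of the columns of its backward matrix. -/
noncomputable def lmcRank {A S : Type} [Fintype S] [DecidableEq S]
    (μ : A → Matrix S S ℝ) : ℕ :=
  Module.finrank ℝ
    (Submodule.span ℝ (Set.range fun w : List A => fun i : S => lmcB μ i w))

/-- `ℳ'` (with transitions `μ'`) covers `ℳ` (with transitions `μ`) iff there is a
row-stochastic matrix `C` with `C · B_{ℳ'} = B_ℳ`. -/
def lmcCovers {A S S' : Type} [Fintype S] [DecidableEq S] [Fintype S'] [DecidableEq S']
    (μ' : A → Matrix S' S' ℝ) (μ : A → Matrix S S ℝ) : Prop :=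
  ∃ C : S → S' → ℝ, (∀ i l, 0 ≤ C i l) ∧ (∀ i, ∑ l, C i l = 1) ∧
    ∀ i (w : List A), ∑ l, C i l * lmcB μ' l w = lmcB μ i w

/-- The LMC constructed from a column-stochastic matrix `M ∈ ℝ_+^{n×m}`:
`μ(a_i)_{0,i} = 1/m`, `μ(b_j)_{i,m+1} = M_{j,i}`, `μ(✓)_{m+1,m+1} = 1`, otherwise `0`. -/
noncomputable def lmcMu {n m : ℕ} (M : Matrix (Fin n) (Fin m) ℝ) :
    (Fin m ⊕ Fin n ⊕ Unit) →
      Matrix (Unit ⊕ Fin m ⊕ Unit) (Unit ⊕ Fin m ⊕ Unit) ℝ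
  | Sum.inl i => Matrix.of fun p q =>
      match p, q with
      | Sum.inl _, Sum.inr (Sum.inl i') => if i' = i then 1 / (m : ℝ) else 0
      | _, _ => 0
  | Sum.inr (Sum.inl j) => Matrix.of fun p q =>
      match p, q with
      | Sum.inr (Sum.inl i), Sum.inr (Sum.inr _) => M j i
      | _, _ => 0
  | Sum.inr (Sum.inr _) => Matrix.of fun p q =>
      match p, q with
      | Sum.inr (Sum.inr _), Sum.inr (Sum.inr _) => 1
      | _, _ => 0

/-- The LMC `ℳ'` obtained from an NMF `M = W · H`:
`μ'(a_i)_{0,l} = H_{l,i}/m`, `μ'(b_j)_{l,d+1} = W_{j,l}`, `μ'(✓)_{d+1,d+1} = 1`,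
otherwise `0`. -/
noncomputable def lmcMu' {n m d : ℕ}
    (W : Matrix (Fin n) (Fin d) ℝ) (H : Matrix (Fin d) (Fin m) ℝ) :
    (Fin m ⊕ Fin n ⊕ Unit) →
      Matrix (Unit ⊕ Fin d ⊕ Unit) (Unit ⊕ Fin d ⊕ Unit) ℝ
  | Sum.inl i => Matrix.of fun p q =>
      match p, q with
      | Sum.inl _, Sum.inr (Sum.inl l) => H l i / (m : ℝ)
      | _, _ => 0
  | Sum.inr (Sum.inl j) => Matrix.of fun p q =>
      match p, q with
      | Sum.inr (Sum.inl l), Sum.inr (Sum.inr _) => W j l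
      | _, _ => 0
  | Sum.inr (Sum.inr _) => Matrix.of fun p q =>
      match p, q with
      | Sum.inr (Sum.inr _), Sum.inr (Sum.inr _) => 1
      | _, _ => 0

/-- The coupling matrix `A ∈ ℝ_+^{(m+2)×(d+2)}` with `A_{0,0} = 1`, `A_{i,l} = H_{l,i}`
for `i ∈ [m]`, `l ∈ [d]`, `A_{m+1,d+1} = 1`, and all other entries zero. -/
def lmcCoupling {m d : ℕ} (H : Matrix (Fin d) (Fin m) ℝ) :
    (Unit ⊕ Fin m ⊕ Unit) → (Unit ⊕ Fin d ⊕ Unit) → ℝ :=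
  fun p q =>
    match p, q with
    | Sum.inl _, Sum.inl _ => 1
    | Sum.inr (Sum.inl i), Sum.inr (Sum.inl l) => H l i
    | Sum.inr (Sum.inr _), Sum.inr (Sum.inr _) => 1
    | _, _ => 0

theorem lmcB_nil {A S : Type} [Fintype S] [DecidableEq S]
    (μ : A → Matrix S S ℝ) (i : S) : lmcB μ i [] = 1 := by
  simp [lmcB, lmcWord, Matrix.one_apply]

theorem lmcB_cons {A S : Type} [Fintype S] [DecidableEq S]
    (μ : A → Matrix S S ℝ) (i : S) (a : A) (w : List A) :
    lmcB μ i (a :: w) = ∑ j, μ a i j * lmcB μ j w := by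
  simp only [lmcB, lmcWord, List.map_cons, List.prod_cons, Matrix.mul_apply, Finset.mul_sum]
  exact Finset.sum_comm

theorem lmcCoupling_sum {m d : ℕ} (H : Matrix (Fin d) (Fin m) ℝ)
    (hHcs : ∀ i : Fin m, ∑ l, H l i = 1) (p) : ∑ q, lmcCoupling H p q = 1 := by
  rcases p with p | p | p <;> simp [lmcCoupling, hHcs]

theorem lmcCoupling_B {n m d : ℕ} (M : Matrix (Fin n) (Fin m) ℝ)
    (W : Matrix (Fin n) (Fin d) ℝ) (H : Matrix (Fin d) (Fin m) ℝ)
    (hHcs : ∀ i : Fin m, ∑ l, H l i = 1) (hfac : M = W * H)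
    (w : List (Fin m ⊕ Fin n ⊕ Unit)) : ∀ p,
    ∑ l, lmcCoupling H p l * lmcB (lmcMu' W H) l w = lmcB (lmcMu M) p w := by
  induction w with
  | nil => intro p; simp only [lmcB_nil, mul_one]; exact lmcCoupling_sum H hHcs p
  | cons a w ih =>
    intro p
    simp only [lmcB_cons, ← ih]
    subst hfac
    rcases p with p | p | p <;> rcases a with a | a | a <;>
      simp [lmcCoupling, lmcMu, lmcMu', Matrix.mul_apply]
    · rw [Finset.mul_sum]
      exact Finset.sum_congr rfl fun l _ => by ring
    · rw [Finset.sum_mul]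
      exact Finset.sum_congr rfl fun l _ => by ring

/-- Embedding used for the rank computation. -/
def lmcEmb {d : ℕ} (R : Submodule ℝ (Fin d → ℝ)) :
    (ℝ × R × ℝ) →ₗ[ℝ] ((Unit ⊕ Fin d ⊕ Unit) → ℝ) where
  toFun x := Sum.elim (fun _ => x.1) (Sum.elim (x.2.1 : Fin d → ℝ) (fun _ => x.2.2))
  map_add' x y := by ext p; rcases p with p | p | p <;> simp
  map_smul' c x := by ext p; rcases p with p | p | p <;> simp

theorem lmcEmb_inj {d : ℕ} (R : Submodule ℝ (Fin d → ℝ)) :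
    Function.Injective (lmcEmb R) := by
  rintro ⟨x, ⟨r, hr⟩, y⟩ ⟨x', ⟨r', hr'⟩, y'⟩ h
  have h1 := congrFun h (Sum.inl ())
  have h2 := fun l => congrFun h (Sum.inr (Sum.inl l))
  have h3 := congrFun h (Sum.inr (Sum.inr ()))
  simp only [lmcEmb, LinearMap.coe_mk, AddHom.coe_mk, Sum.elim_inl, Sum.elim_inr] at h1 h2 h3
  have h2' : r = r' := funext h2
  subst h1 h2' h3
  rfl

theorem lmc_span {n m d : ℕ} (hm : 0 < m)
    (W : Matrix (Fin n) (Fin d) ℝ) (H : Matrix (Fin d) (Fin m) ℝ)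
    (hWcs : ∀ l : Fin d, ∑ j, W j l = 1) (hHcs : ∀ i : Fin m, ∑ l, H l i = 1) :
    Submodule.span ℝ (Set.range fun w : List (Fin m ⊕ Fin n ⊕ Unit) =>
      fun i => lmcB (lmcMu' W H) i w)
      = LinearMap.range (lmcEmb (Submodule.span ℝ (Set.range W.row))) := by
  have hrow : ∀ j, W.row j ∈ Submodule.span ℝ (Set.range W.row) :=
    fun j => Submodule.subset_span ⟨j, rfl⟩
  have hrr : ∀ j l, W.row j l = W j l := fun _ _ => rfl
  apply le_antisymm
  · rw [Submodule.span_le]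
    rintro _ ⟨w, rfl⟩
    rcases w with _ | ⟨a | a | a, w⟩
    · refine ⟨(1, ⟨∑ j, W.row j, Submodule.sum_mem _ fun j _ => hrow j⟩, 1), ?_⟩
      ext p
      rcases p with p | p | p <;> simp [lmcEmb, lmcB_nil, hrr, hWcs]
    · refine ⟨(lmcB (lmcMu' W H) (Sum.inl ()) (Sum.inl a :: w), 0, 0), ?_⟩
      ext p
      rcases p with p | p | p <;> simp [lmcEmb, lmcB_cons, lmcMu']
    · refine ⟨(0, lmcB (lmcMu' W H) (Sum.inr (Sum.inr ())) w • ⟨W.row a, hrow a⟩, 0), ?_⟩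
      ext p
      rcases p with p | p | p <;> simp [lmcEmb, lmcB_cons, lmcMu', hrr, mul_comm]
    · refine ⟨(0, 0, lmcB (lmcMu' W H) (Sum.inr (Sum.inr ())) w), ?_⟩
      ext p
      rcases p with p | p | p <;> simp [lmcEmb, lmcB_cons, lmcMu']
  · rintro _ ⟨⟨x, ⟨r, hr⟩, y⟩, rfl⟩
    set T := Submodule.span ℝ (Set.range fun w : List (Fin m ⊕ Fin n ⊕ Unit) =>
      fun i => lmcB (lmcMu' W H) i w) with hT
    have hb : ∀ w : List (Fin m ⊕ Fin n ⊕ Unit), (fun i => lmcB (lmcMu' W H) i w) ∈ T :=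
      fun w => Submodule.subset_span ⟨w, rfl⟩
    have hmid : ∀ r ∈ Submodule.span ℝ (Set.range W.row),
        (Sum.elim (fun _ => 0) (Sum.elim r (fun _ => 0)) : (Unit ⊕ Fin d ⊕ Unit) → ℝ) ∈ T := by
      intro r hr
      induction hr using Submodule.span_induction with
      | mem x hx =>
        obtain ⟨j, rfl⟩ := hx
        convert hb [Sum.inr (Sum.inl j)] using 1
        ext p
        rcases p with p | p | p <;> simp [lmcB_cons, lmcB_nil, lmcMu', Matrix.row]
      | zero =>
        convert T.zero_mem using 1
        ext p
        rcases p with p | p | p <;> simp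
      | add x y _ _ hx hy =>
        convert T.add_mem hx hy using 1
        ext p
        rcases p with p | p | p <;> simp
      | smul c x _ hx =>
        convert T.smul_mem c hx using 1
        ext p
        rcases p with p | p | p <;> simp
    have hm' : (m : ℝ) ≠ 0 := by positivity
    convert T.add_mem (T.add_mem (T.smul_mem (x * m) (hb [Sum.inl ⟨0, hm⟩])) (hmid r hr))
      (T.smul_mem y (hb [Sum.inr (Sum.inr ())])) using 1
    ext p
    rcases p with p | p | p <;>
      simp [lmcEmb, lmcB_cons, lmcB_nil, lmcMu', ← Finset.sum_div, hHcs, hm']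

/-- If `M = W · H` with `M`, `W`, `H` column-stochastic and nonnegative, then the LMC
`ℳ'` built from the factorization has rank `rank(W) + 2`, the coupling matrix `A` is
row-stochastic and satisfies `A · B_{ℳ'} = B_ℳ`; in particular `ℳ'` covers `ℳ`. -/
theorem stmt6 {n m d : ℕ} (hm : 0 < m)
    (M : Matrix (Fin n) (Fin m) ℚ)
    (hMnn : ∀ j i, 0 ≤ M j i) (hMcs : ∀ i : Fin m, ∑ j, M j i = 1)
    (W : Matrix (Fin n) (Fin d) ℝ) (H : Matrix (Fin d) (Fin m) ℝ)
    (hWnn : ∀ j l, 0 ≤ W j l) (hWcs : ∀ l : Fin d, ∑ j, W j l = 1)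
    (hHnn : ∀ l i, 0 ≤ H l i) (hHcs : ∀ i : Fin m, ∑ l, H l i = 1)
    (hfac : M.map ((↑) : ℚ → ℝ) = W * H) :
    lmcRank (lmcMu' W H) = W.rank + 2 ∧
    (∀ p q, 0 ≤ lmcCoupling H p q) ∧
    (∀ p, ∑ q, lmcCoupling H p q = 1) ∧
    (∀ p (w : List (Fin m ⊕ Fin n ⊕ Unit)),
        ∑ l, lmcCoupling H p l * lmcB (lmcMu' W H) l w
          = lmcB (lmcMu (M.map ((↑) : ℚ → ℝ))) p w) ∧
    lmcCovers (lmcMu' W H) (lmcMu (M.map ((↑) : ℚ → ℝ))) := by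
  have hc := fun p w => lmcCoupling_B (M.map ((↑) : ℚ → ℝ)) W H hHcs hfac w p
  have hnn : ∀ p q, 0 ≤ lmcCoupling H p q := by
    intro p q
    rcases p with p | p | p <;> rcases q with q | q | q <;> simp [lmcCoupling, hHnn]
  refine ⟨?_, hnn, lmcCoupling_sum H hHcs, hc, lmcCoupling H, hnn, lmcCoupling_sum H hHcs, hc⟩
  rw [lmcRank, lmc_span hm W H hWcs hHcs, LinearMap.finrank_range_of_inj (lmcEmb_inj _),
    Matrix.rank_eq_finrank_span_row]
  simp only [Module.finrank_prod, Module.finrank_self]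
  omega
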